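/- Hardy-type embedding: Let Ω = B₁ be the closed unit ball in ℝ³, let b ∈ ℤ_{>0}, and let a with 0 < a ≤ 2b be such that b − a/2 is a nonnegative integer. Then there is a constant C such that for every function F with ‖F‖_{H^{a,b}(Ω)} < ∞, one has F ∈ H^{b−a/2}(Ω) and ‖F‖_{H^{b−a/2}(Ω)} ≤ C ‖F‖_{H^{a,b}(Ω)}. -/

import Mathlib

/-!
The exponent `a` equals `2m` with `m = b - s`, so it is enough to prove the one-step Hardy
inequality `∫ d^{2n} f² ≤ C ∫ d^{2n+2} (f² + |∇f|²)` on the open ball (`hardy_energy`) for smooth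
`f`, apply it to all derivatives of `F`, and iterate it `m` times (`totalEnergy_iterate`). The unit
sphere is null, so integrals over the closed and the open ball agree.

For the one-step inequality, replace `d` by the smooth comparable function `t = 1 - |x|²`, and
integrate the divergence of the field `t^{2n} φ(t) f² x`. Here `φ` is the primitive of a continuous
nondecreasing ramp which is `0` for `t ≤ ε` and `1` for `t ≥ 2ε`, so the field is `C¹` with compact
support in the ball and its divergence integrates to zero. Differentiating `φ(t)` produces the term
`-2|x|² t^{2n} φ'(t) f²`; differentiating `t^{2n}` gives a term of the same sign, and everything
else is absorbed by `φ(t) ≤ t φ'(t)`, `|x|² = 1 - t` and Young's inequality (`pointwise_bound`).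
The constant is independent of `ε`, so `ε → 0` concludes. Working with extended nonnegative
integrals makes the iteration free of integrability side conditions; integrability of the
derivatives of order at most `s` comes out of the final finite bound.
-/

noncomputable section

open MeasureTheory Real Finset

/-- Points of `ℝ³`. -/
abbrev V3 := Fin 3 → ℝ

/-- The Euclidean norm on `ℝ³`. -/
def enorm3 (x : V3) : ℝ := Real.sqrt (∑ i, x i ^ 2)

/-- `Ω = B₁`, the closed Euclidean unit ball of `ℝ³`. -/
def Om : Set V3 := {x | enorm3 x ≤ 1}

/-- The distance to the boundary `∂Ω` of the unit ball (for points of the ball). -/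
def dOm (x : V3) : ℝ := 1 - enorm3 x

/-- The partial derivative `∂ᵢ`. -/
def pd (i : Fin 3) (f : V3 → ℝ) : V3 → ℝ := fun x => fderiv ℝ f x (Pi.single i 1)

/-- The radial derivative `Λ = xᵢ∂ᵢ`. -/
def LamOp (f : V3 → ℝ) : V3 → ℝ := fun x => ∑ i, x i * pd i f x

/-- The angular derivative `∂̸ᵢⱼ = xᵢ∂ⱼ − xⱼ∂ᵢ`. -/
def angOp (i j : Fin 3) (f : V3 → ℝ) : V3 → ℝ := fun x => x i * pd j f x - x j * pd i f x

/-- `Λ^m ∂̸₁₂^{n₁} ∂̸₁₃^{n₂} ∂̸₂₃^{n₃}`. -/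
def Ndell (m n1 n2 n3 : ℕ) : (V3 → ℝ) → V3 → ℝ :=
  LamOp^[m] ∘ (angOp 0 1)^[n1] ∘ (angOp 0 2)^[n2] ∘ (angOp 1 2)^[n3]

/-- `∇^k = ∂₁^{k₁}∂₂^{k₂}∂₃^{k₃}`. -/
def gradPow (k1 k2 k3 : ℕ) : (V3 → ℝ) → V3 → ℝ :=
  (pd 0)^[k1] ∘ (pd 1)^[k2] ∘ (pd 2)^[k3]

/-- Componentwise action of `Λ^m∂̸^n` on a vector field. -/
def NdellV (m n1 n2 n3 : ℕ) (F : V3 → V3) : V3 → V3 :=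
  fun x i => Ndell m n1 n2 n3 (fun y => F y i) x

/-- Componentwise action of `∇^k` on a vector field. -/
def gradPowV (k1 k2 k3 : ℕ) (F : V3 → V3) : V3 → V3 :=
  fun x i => gradPow k1 k2 k3 (fun y => F y i) x

/-- Squared Euclidean magnitude of a vector. -/
def sqnorm (v : V3) : ℝ := ∑ i, v i ^ 2

/-- The set of indices `(m, n₁, n₂, n₃)` with `m + |n| ≤ b`. -/
def tIdx (b : ℕ) : Finset (ℕ × ℕ × ℕ × ℕ) :=
  ((range (b+1)) ×ˢ (range (b+1)) ×ˢ (range (b+1)) ×ˢ (range (b+1))).filter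
    (fun p => p.1 + p.2.1 + p.2.2.1 + p.2.2.2 ≤ b)

/-- The set of multi-indices `k = (k₁,k₂,k₃)` with `|k| ≤ b`. -/
def kIdx (b : ℕ) : Finset (ℕ × ℕ × ℕ) :=
  ((range (b+1)) ×ˢ (range (b+1)) ×ˢ (range (b+1))).filter
    (fun q => q.1 + q.2.1 + q.2.2 ≤ b)

/-- The gradient matrix `(∇ζ)^i_j = ∂_j ζ^i`. -/
def gradMat (ζ : V3 → V3) (x : V3) : Matrix (Fin 3) (Fin 3) ℝ :=
  Matrix.of fun i j => pd j (fun y => ζ y i) x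

/-- The Jacobian `𝓙 = det ∇ζ`. -/
def Jac (ζ : V3 → V3) (x : V3) : ℝ := (gradMat ζ x).det

/-- The inverse matrix `𝓐 = (∇ζ)⁻¹`. -/
def Ainv (ζ : V3 → V3) (x : V3) : Matrix (Fin 3) (Fin 3) ℝ := (gradMat ζ x)⁻¹

/-- The Lagrangian gradient `(∇_ζ F)^i_j = 𝓐^k_j ∂_k F^i`. -/
def Dgrad (ζ F : V3 → V3) (x : V3) : Matrix (Fin 3) (Fin 3) ℝ :=
  Matrix.of fun i j => ∑ k, Ainv ζ x k j * pd k (fun y => F y i) x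

/-- The Lagrangian divergence `div_ζ F = 𝓐^k_i ∂_k F^i`. -/
def Ddiv (ζ F : V3 → V3) (x : V3) : ℝ := ∑ i, ∑ k, Ainv ζ x k i * pd k (fun y => F y i) x

/-- The Lagrangian matrix curl `(Curl_ζ F)^i_j = 𝓐^s_j ∂_s F^i − 𝓐^s_i ∂_s F^j`. -/
def Dcurl (ζ F : V3 → V3) (x : V3) : Matrix (Fin 3) (Fin 3) ℝ :=
  Matrix.of fun i j =>
    (∑ s, Ainv ζ x s j * pd s (fun y => F y i) x) - (∑ s, Ainv ζ x s i * pd s (fun y => F y j) x)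

/-- Squared Frobenius magnitude of `∇_ζ G` at a point. -/
def gradSq (ζ : V3 → V3) : (V3 → V3) → V3 → ℝ := fun G x => ∑ i, ∑ j, (Dgrad ζ G x i j) ^ 2

/-- Squared magnitude of `div_ζ G` at a point. -/
def divSq (ζ : V3 → V3) : (V3 → V3) → V3 → ℝ := fun G x => (Ddiv ζ G x) ^ 2

/-- Squared Frobenius magnitude of `Curl_ζ G` at a point. -/
def curlSq (ζ : V3 → V3) : (V3 → V3) → V3 → ℝ := fun G x => ∑ i, ∑ j, (Dcurl ζ G x i j) ^ 2

/-- The squared `X^b_κ`-norm of a scalar function. -/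
def Xnorm2s (α : ℝ) (W χ : V3 → ℝ) (b : ℕ) (f : V3 → ℝ) : ℝ :=
  (∑ p ∈ tIdx b, ∫ x in Om,
      χ x * W x ^ (α + (p.1 : ℝ)) * (Ndell p.1 p.2.1 p.2.2.1 p.2.2.2 f x) ^ 2)
  + ∑ q ∈ kIdx b, ∫ x in Om,
      (1 - χ x) * W x ^ α * (gradPow q.1 q.2.1 q.2.2 f x) ^ 2

/-- The squared `X^b_κ`-norm of a vector field. -/
def Xnorm2 (α : ℝ) (W χ : V3 → ℝ) (b : ℕ) (F : V3 → V3) : ℝ :=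
  (∑ p ∈ tIdx b, ∫ x in Om,
      χ x * W x ^ (α + (p.1 : ℝ)) * sqnorm (NdellV p.1 p.2.1 p.2.2.1 p.2.2.2 F x))
  + ∑ q ∈ kIdx b, ∫ x in Om,
      (1 - χ x) * W x ^ α * sqnorm (gradPowV q.1 q.2.1 q.2.2 F x)

/-- The squared `X^b_κ`-norm of the gradient matrix `∇μ` of a vector field `μ`. -/
def Xnorm2grad (α : ℝ) (W χ : V3 → ℝ) (b : ℕ) (μ : V3 → V3) : ℝ :=
  ∑ i, ∑ j, Xnorm2s α W χ b (fun x => pd j (fun y => μ y i) x)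

/-- The squared `Y^b_κ[𝒟]`-seminorm, for the pointwise squared magnitude `Dsq` of a
Lagrangian derivative operator `𝒟`. -/
def Ynorm2 (α : ℝ) (W χ : V3 → ℝ) (ζ : V3 → V3) (b : ℕ)
    (Dsq : (V3 → V3) → V3 → ℝ) (F : V3 → V3) : ℝ :=
  (∑ p ∈ tIdx b, ∫ x in Om,
      χ x * W x ^ (1 + α + (p.1 : ℝ)) * Jac ζ x ^ (-(1/α)) *
        Dsq (NdellV p.1 p.2.1 p.2.2.1 p.2.2.2 F) x)
  + ∑ q ∈ kIdx b, ∫ x in Om,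
      (1 - χ x) * W x ^ (1 + α) * Jac ζ x ^ (-(1/α)) *
        Dsq (gradPowV q.1 q.2.1 q.2.2 F) x

/-- Membership in `X^b_κ` for a scalar function: all weighted derivatives are square
integrable with the appropriate weights. -/
def MemXs (α : ℝ) (W χ : V3 → ℝ) (b : ℕ) (f : V3 → ℝ) : Prop :=
  (∀ p ∈ tIdx b, IntegrableOn
      (fun x => χ x * W x ^ (α + (p.1 : ℝ)) * (Ndell p.1 p.2.1 p.2.2.1 p.2.2.2 f x) ^ 2) Om) ∧
  ∀ q ∈ kIdx b, IntegrableOn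
      (fun x => (1 - χ x) * W x ^ α * (gradPow q.1 q.2.1 q.2.2 f x) ^ 2) Om

/-- Membership in `X^b_κ` for a vector field. -/
def MemX (α : ℝ) (W χ : V3 → ℝ) (b : ℕ) (F : V3 → V3) : Prop :=
  ∀ i : Fin 3, MemXs α W χ b (fun x => F x i)

/-- `∇μ ∈ X^b_κ` for a vector field `μ`. -/
def MemXgrad (α : ℝ) (W χ : V3 → ℝ) (b : ℕ) (μ : V3 → V3) : Prop :=
  ∀ i j : Fin 3, MemXs α W χ b (fun x => pd j (fun y => μ y i) x)

/-- Membership in `Y^b_κ[Curl_ζ]`. -/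
def MemYcurl (α : ℝ) (W χ : V3 → ℝ) (ζ : V3 → V3) (b : ℕ) (F : V3 → V3) : Prop :=
  (∀ p ∈ tIdx b, IntegrableOn
      (fun x => χ x * W x ^ (1 + α + (p.1 : ℝ)) * Jac ζ x ^ (-(1/α)) *
        curlSq ζ (NdellV p.1 p.2.1 p.2.2.1 p.2.2.2 F) x) Om) ∧
  ∀ q ∈ kIdx b, IntegrableOn
      (fun x => (1 - χ x) * W x ^ (1 + α) * Jac ζ x ^ (-(1/α)) *
        curlSq ζ (gradPowV q.1 q.2.1 q.2.2 F) x) Om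

/-- The gradient of a scalar function, as a vector field. -/
def gradScalar (f : V3 → ℝ) : V3 → V3 := fun x i => pd i f x

/-- An admissible enthalpy profile on the closed unit ball: positive inside, vanishing on
the boundary, comparable to the distance function to the boundary, with smooth ratio. -/
def AdmissibleProfile (W : V3 → ℝ) : Prop :=
  (∀ x, enorm3 x < 1 → 0 < W x) ∧
  (∀ x, enorm3 x = 1 → W x = 0) ∧
  (∃ C > 0, ∀ x ∈ Om, (1/C) * dOm x ≤ W x ∧ W x ≤ C * dOm x) ∧
  ∃ g : V3 → ℝ, ContDiffOn ℝ (⊤ : ℕ∞) g Om ∧ ∀ x ∈ Om, W x = g x * dOm x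

/-- A smooth radial cutoff `χ` on the unit ball: `χ = 0` for `|x| ≤ 1/4` and `χ = 1`
for `3/4 ≤ |x| ≤ 1`. -/
def Cutoff (χ : V3 → ℝ) : Prop :=
  ContDiff ℝ (⊤ : ℕ∞) χ ∧
  (∀ x y : V3, enorm3 x = enorm3 y → χ x = χ y) ∧
  (∀ x : V3, enorm3 x ≤ 1/4 → χ x = 0) ∧
  (∀ x : V3, 3/4 ≤ enorm3 x → enorm3 x ≤ 1 → χ x = 1) ∧
  ∀ x : V3, 0 ≤ χ x ∧ χ x ≤ 1

/-- The flow-map ansatz `ζ_κ(τ,x) = x + e^{−τ}x̄_κ + (1−e^{−τ})μ_κ(x) + θ_κ(τ,x)`. -/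
def zeta (xbar : V3) (μ : V3 → V3) (θ : ℝ → V3 → V3) (τ : ℝ) : V3 → V3 :=
  fun x => x + Real.exp (-τ) • xbar + (1 - Real.exp (-τ)) • μ x + θ τ x

/-- Time derivative `∂_τ θ`. -/
def tderiv (θ : ℝ → V3 → V3) (τ : ℝ) : V3 → V3 := fun x => deriv (fun s => θ s x) τ

/-- The self-interaction term
`𝒢^i(τ,x) = δ^α e^{−τ} ∫_Ω ∂_{z_k}(𝓐^k_i W^α)(z)/|ζ(τ,x) − ζ(τ,z)| dz`. -/
def selfG (α δ τ : ℝ) (W : V3 → ℝ) (ζ : V3 → V3) (x : V3) (i : Fin 3) : ℝ :=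
  δ ^ α * Real.exp (-τ) *
    ∫ z in Om, (∑ k, pd k (fun y => Ainv ζ y k i * W y ^ α) z) / enorm3 (ζ x - ζ z)

/-- The tidal term
`𝓘^i_{[κ,κ']}(τ,x) = δ^α e^{−τ} ∫_Ω (ζ_κ^i(τ,x) − ζ_{κ'}^i(τ,z)) W_{κ'}^α(z)/|ζ_κ(τ,x) − ζ_{κ'}(τ,z)|³ dz`. -/
def tidalI (α δ τ : ℝ) (W' : V3 → ℝ) (ζx ζz : V3 → V3) (x : V3) (i : Fin 3) : ℝ :=
  δ ^ α * Real.exp (-τ) *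
    ∫ z in Om, (ζx x i - ζz z i) * W' z ^ α / enorm3 (ζx x - ζz z) ^ 3

/-- The Lagrangian gravitational force `𝓐[κ]^k_i∂_kψ_κ = −𝒢_κ^i − Σ_{κ'≠κ} 𝓘^i_{[κ,κ']}`. -/
def gravForce (N : ℕ) (α δ : ℝ) (W : Fin N → V3 → ℝ) (ζ : Fin N → ℝ → V3 → V3)
    (κ : Fin N) (τ : ℝ) (x : V3) (i : Fin 3) : ℝ :=
  -(selfG α δ τ (W κ) (ζ κ τ) x i)
  - ∑ κ' ∈ Finset.univ.erase κ, tidalI α δ τ (W κ') (ζ κ τ) (ζ κ' τ) x i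

/-- `{(∂_τθ_κ, θ_κ)}` solves the rescaled Lagrangian `N`-body Euler–Poisson system on `[0,T]`. -/
def IsRescaledSolution (N : ℕ) (α β δ : ℝ) (xbar : Fin N → V3) (W : Fin N → V3 → ℝ)
    (μ : Fin N → V3 → V3) (θ : Fin N → ℝ → V3 → V3) (T : ℝ) : Prop :=
  ∀ κ : Fin N, ∀ τ ∈ Set.Icc (0:ℝ) T, ∀ x ∈ Om, ∀ i : Fin 3,
    (1/δ) * Real.exp (β * τ) * W κ x ^ α *
        (deriv (fun s => deriv (fun s' => θ κ s' x i) s) τ + deriv (fun s => θ κ s x i) τ)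
    + (∑ k, pd k (fun y => W κ y ^ (1 + α) *
          Ainv (zeta (xbar κ) (μ κ) (θ κ) τ) y k i *
          Jac (zeta (xbar κ) (μ κ) (θ κ) τ) y ^ (-(1/α))) x)
    + (1/δ) * Real.exp (β * τ) * W κ x ^ α *
        gravForce N α δ W (fun κ' => zeta (xbar κ') (μ κ') (θ κ')) κ τ x i = 0

/-- The truncated higher order energy function `S^b_κ(τ₁,τ₂)` of a single star. -/
def Sk (α β δ : ℝ) (W χ : V3 → ℝ) (xbar : V3) (μ : V3 → V3) (θ : ℝ → V3 → V3)
    (b : ℕ) (τ₁ τ₂ : ℝ) : ℝ :=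
  sSup ((fun τ' =>
      (1/δ) * Real.exp (β * τ') * Xnorm2 α W χ b (tderiv θ τ')
      + Xnorm2 α W χ b (θ τ')
      + Ynorm2 α W χ (zeta xbar μ θ τ') b (gradSq (zeta xbar μ θ τ')) (θ τ')
      + (1/α) * Ynorm2 α W χ (zeta xbar μ θ τ') b (divSq (zeta xbar μ θ τ')) (θ τ')) ''
    Set.Icc τ₁ τ₂)

/-- The curl energy function `C^b_κ(τ)` of a single star. -/
def Ck (α : ℝ) (W χ : V3 → ℝ) (xbar : V3) (μ : V3 → V3) (θ : ℝ → V3 → V3)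
    (b : ℕ) (τ : ℝ) : ℝ :=
  sSup ((fun τ' =>
      Ynorm2 α W χ (zeta xbar μ θ τ') b (curlSq (zeta xbar μ θ τ')) (tderiv θ τ')
      + Ynorm2 α W χ (zeta xbar μ θ τ') b (curlSq (zeta xbar μ θ τ')) (θ τ')) ''
    Set.Icc 0 τ)

/-- The cumulative (truncated) energy `S_b(τ₁,τ₂) = Σ_κ S^b_κ(τ₁,τ₂)`;
`S_b(τ) = Stot … 0 τ`. -/
def Stot (N : ℕ) (α β δ : ℝ) (W : Fin N → V3 → ℝ) (χ : V3 → ℝ) (xbar : Fin N → V3)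
    (μ : Fin N → V3 → V3) (θ : Fin N → ℝ → V3 → V3) (b : ℕ) (τ₁ τ₂ : ℝ) : ℝ :=
  ∑ κ, Sk α β δ (W κ) χ (xbar κ) (μ κ) (θ κ) b τ₁ τ₂

/-- The cumulative curl energy `C_b(τ) = Σ_κ C^b_κ(τ)`. -/
def Ctot (N : ℕ) (α : ℝ) (W : Fin N → V3 → ℝ) (χ : V3 → ℝ) (xbar : Fin N → V3)
    (μ : Fin N → V3 → V3) (θ : Fin N → ℝ → V3 → V3) (b : ℕ) (τ : ℝ) : ℝ :=
  ∑ κ, Ck α (W κ) χ (xbar κ) (μ κ) (θ κ) b τ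

/-- The Strong Separation Condition with constant `L`. -/
def SSC (N : ℕ) (L : ℝ) (xbar : Fin N → V3) (μ : Fin N → V3 → V3) : Prop :=
  ∀ κ κ' : Fin N, κ ≠ κ' → ∀ lam ∈ Set.Icc (0:ℝ) 1, ∀ x ∈ Om, ∀ z ∈ Om,
    L ≤ enorm3 ((1 - lam) • (μ κ x - μ κ' z) + lam • (xbar κ - xbar κ'))

/-- The a priori assumptions on `[0,T]`. -/
def APriori (N : ℕ) (α β δ ε₁ ε₂ : ℝ) (M : ℕ) (xbar : Fin N → V3)
    (W : Fin N → V3 → ℝ) (χ : V3 → ℝ) (μ : Fin N → V3 → V3)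
    (θ : Fin N → ℝ → V3 → V3) (T : ℝ) : Prop :=
  (∀ κ, Xnorm2grad α (W κ) χ M (μ κ) ≤ ε₁) ∧
  SSC N (3 + ε₂) xbar μ ∧
  ∀ τ ∈ Set.Icc (0:ℝ) T,
    Stot N α β δ W χ xbar μ θ M 0 τ ≤ ε₂ ∧
    (∀ κ, ∀ x ∈ Om, ∀ i j : Fin 3,
        |Ainv (zeta (xbar κ) (μ κ) (θ κ) τ) x i j - (if i = j then (1:ℝ) else 0)| ≤ ε₂) ∧
    (∀ κ, ∀ x ∈ Om, |Jac (zeta (xbar κ) (μ κ) (θ κ) τ) x - 1| ≤ ε₂) ∧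
    (∑ κ, sSup ((fun x => enorm3 (θ κ τ x)) '' Om)) ≤ ε₂

/-- The standing hypotheses: admissible adiabatic exponent, relations between the
parameters, admissible data, a solution on `[0,T]`, and the a priori assumptions. -/
def StandingHyps (N : ℕ) (γ α β δ ε₁ ε₂ : ℝ) (M : ℕ) (xbar : Fin N → V3)
    (W : Fin N → V3 → ℝ) (χ : V3 → ℝ) (μ : Fin N → V3 → V3)
    (θ : Fin N → ℝ → V3 → V3) (T : ℝ) : Prop :=
  2 ≤ N ∧
  ((∃ n : ℕ, 2 ≤ n ∧ γ = 1 + 1/(n:ℝ)) ∨ (1 < γ ∧ γ < 14/13)) ∧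
  α = 1/(γ - 1) ∧ β = 3/α ∧
  0 < δ ∧ δ < 1 ∧ 0 < ε₁ ∧ 0 < ε₂ ∧
  2 * ⌈α⌉₊ + 12 ≤ M ∧
  (∀ κ, AdmissibleProfile (W κ)) ∧ Cutoff χ ∧ 0 ≤ T ∧
  IsRescaledSolution N α β δ xbar W μ θ T ∧
  APriori N α β δ ε₁ ε₂ M xbar W χ μ θ T

theorem test_preamble : True := trivial

/-- The squared weighted Sobolev norm `‖F‖²_{H^{a,b}(Ω)}`. -/
def HabNorm2 (a : ℝ) (b : ℕ) (F : V3 → ℝ) : ℝ :=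
  ∑ q ∈ kIdx b, ∫ x in Om, dOm x ^ a * (gradPow q.1 q.2.1 q.2.2 F x) ^ 2

/-- The squared Sobolev norm `‖F‖²_{H^s(Ω)}`. -/
def HsNorm2 (s : ℕ) (F : V3 → ℝ) : ℝ :=
  ∑ q ∈ kIdx s, ∫ x in Om, (gradPow q.1 q.2.1 q.2.2 F x) ^ 2

/-! ### The open ball and its defining function -/

/-- The open Euclidean unit ball of `ℝ³`. -/
def openBall3 : Set V3 := {x | enorm3 x < 1}

/-- The smooth substitute `1 - |x|²` for the distance to the unit sphere: inside the ball it lies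
between `d` and `2d`. -/
def bdf (x : V3) : ℝ := 1 - ∑ i, x i ^ 2

lemma mem_openBall3_iff (x : V3) : x ∈ openBall3 ↔ 0 < bdf x := by
  unfold openBall3 bdf enorm3
  rw [Set.mem_ofPred_eq, Real.sqrt_lt' one_pos]
  constructor <;> intro h <;> linarith

lemma contDiff_bdf : ContDiff ℝ (⊤ : ℕ∞) bdf := by
  unfold bdf
  fun_prop

lemma isOpen_openBall3 : IsOpen openBall3 := by
  have : openBall3 = bdf ⁻¹' Set.Ioi 0 := by
    ext x; exact mem_openBall3_iff x
  rw [this]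
  exact isOpen_Ioi.preimage contDiff_bdf.continuous

lemma pd_bdf (i : Fin 3) (x : V3) : pd i bdf x = -2 * x i := by
  have hp : ∀ j : Fin 3, HasFDerivAt (fun x : V3 => x j ^ 2)
      ((2 * x j) • (ContinuousLinearMap.proj j : V3 →L[ℝ] ℝ)) x := by
    intro j
    have := ((ContinuousLinearMap.proj (R := ℝ) (φ := fun _ : Fin 3 => ℝ) j).hasFDerivAt
      (x := x)).pow 2
    simpa using this
  have h : HasFDerivAt bdf
      (-∑ j, (2 * x j) • (ContinuousLinearMap.proj j : V3 →L[ℝ] ℝ)) x := by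
    unfold bdf
    have := (HasFDerivAt.fun_sum (u := Finset.univ) (fun j _ => hp j)).const_sub 1
    exact this
  unfold pd
  rw [h.fderiv]
  simp [Pi.single_apply]

lemma dOm_le_bdf {x : V3} (hx : x ∈ openBall3) :
    0 < dOm x ∧ dOm x ≤ bdf x ∧ bdf x ≤ 2 * dOm x := by
  have h1 : enorm3 x < 1 := hx
  have h0 : 0 ≤ enorm3 x := Real.sqrt_nonneg _
  have h2 : enorm3 x ^ 2 = ∑ i, x i ^ 2 := Real.sq_sqrt (by positivity)
  unfold dOm bdf
  rw [← h2]
  refine ⟨by linarith, by nlinarith, by nlinarith⟩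

/-- The unit sphere is Lebesgue-null, so integrals over the closed and the open ball agree. -/
lemma Om_ae_eq : Om =ᵐ[volume] openBall3 := by
  have hz : volume (WithLp.toLp 2 ⁻¹' Metric.sphere (0 : EuclideanSpace ℝ (Fin 3)) 1) = 0 := by
    rw [(PiLp.volume_preserving_toLp (Fin 3)).measure_preimage
      Metric.isClosed_sphere.measurableSet.nullMeasurableSet]
    exact Measure.addHaar_sphere _ _ _
  have hne : ∀ᵐ x : V3, enorm3 x ≠ 1 := by
    rw [ae_iff]
    refine measure_mono_null ?_ hz
    intro x hx
    have hx' : enorm3 x = 1 := by simpa using hx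
    simpa [EuclideanSpace.norm_eq, enorm3] using hx'
  filter_upwards [hne] with x hx
  have : (x ∈ Om) = (x ∈ openBall3) := propext ⟨fun h => lt_of_le_of_ne h hx, fun h => LT.lt.le (b := (1 : ℝ)) h⟩
  exact this

/-! ### Partial derivatives of functions smooth in the ball -/

/-- Smoothness in the open ball. -/
def SmoothIn (f : V3 → ℝ) : Prop := ContDiffOn ℝ (⊤ : ℕ∞) f openBall3

lemma SmoothIn.contDiffAt {f : V3 → ℝ} (hf : SmoothIn f) {x : V3} (hx : x ∈ openBall3) :
    ContDiffAt ℝ (⊤ : ℕ∞) f x :=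
  ContDiffOn.contDiffAt hf (isOpen_openBall3.mem_nhds hx)

lemma SmoothIn.pd {f : V3 → ℝ} (hf : SmoothIn f) (i : Fin 3) : SmoothIn (pd i f) := by
  intro x hx
  have h := (hf.contDiffAt hx).fderiv_right (m := (⊤ : ℕ∞)) (by simp)
  exact (h.clm_apply contDiffAt_const).contDiffWithinAt

lemma SmoothIn.pd_iterate {f : V3 → ℝ} (hf : SmoothIn f) (i : Fin 3) (k : ℕ) :
    SmoothIn ((_root_.pd i)^[k] f) := by
  induction k with
  | zero => exact hf
  | succ k ih => rw [Function.iterate_succ_apply']; exact ih.pd i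

lemma SmoothIn.gradPow {f : V3 → ℝ} (hf : SmoothIn f) (k1 k2 k3 : ℕ) :
    SmoothIn (gradPow k1 k2 k3 f) :=
  ((hf.pd_iterate 2 k3).pd_iterate 1 k2).pd_iterate 0 k1

lemma pd_congr {f g : V3 → ℝ} (h : Set.EqOn f g openBall3) (i : Fin 3) :
    Set.EqOn (pd i f) (pd i g) openBall3 := by
  intro x hx
  have : f =ᶠ[nhds x] g := h.eventuallyEq_of_mem (isOpen_openBall3.mem_nhds hx)
  unfold pd
  rw [this.fderiv_eq]

lemma pd_iterate_congr {f g : V3 → ℝ} (h : Set.EqOn f g openBall3) (i : Fin 3) (k : ℕ) :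
    Set.EqOn ((pd i)^[k] f) ((pd i)^[k] g) openBall3 := by
  induction k with
  | zero => exact h
  | succ k ih => rw [Function.iterate_succ_apply', Function.iterate_succ_apply']; exact pd_congr ih i

/-- Symmetry of second derivatives in the ball. -/
lemma pd_comm {f : V3 → ℝ} (hf : SmoothIn f) (i j : Fin 3) :
    Set.EqOn (pd i (pd j f)) (pd j (pd i f)) openBall3 := by
  intro x hx
  have hfx := hf.contDiffAt hx
  have hs : IsSymmSndFDerivAt ℝ f x := by
    refine hfx.isSymmSndFDerivAt ?_
    rw [minSmoothness_of_isRCLikeNormedField]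
    exact WithTop.coe_le_coe.2 le_top
  have hd : DifferentiableAt ℝ (fderiv ℝ f) x :=
    (hfx.fderiv_right (m := (⊤ : ℕ∞)) (by simp)).differentiableAt (by simp)
  have key : ∀ a b : Fin 3,
      pd a (pd b f) x = fderiv ℝ (fderiv ℝ f) x (Pi.single a 1) (Pi.single b 1) := by
    intro a b
    unfold pd
    rw [fderiv_clm_apply hd (differentiableAt_const _)]
    simp
  rw [key, key]
  exact hs _ _

lemma pd_iterate_comm {f : V3 → ℝ} (hf : SmoothIn f) (i j : Fin 3) (k : ℕ) :
    Set.EqOn (pd i ((pd j)^[k] f)) ((pd j)^[k] (pd i f)) openBall3 := by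
  induction k with
  | zero => intro x _; rfl
  | succ k ih =>
    rw [Function.iterate_succ_apply', Function.iterate_succ_apply']
    exact (pd_comm (hf.pd_iterate j k) i j).trans (pd_congr ih j)

/-- Applying one more partial derivative to `∇^k f` gives, inside the ball, a `∇^{k'} f` with
`|k'| = |k| + 1`. -/
lemma pd_gradPow {f : V3 → ℝ} (hf : SmoothIn f) (i : Fin 3) (k1 k2 k3 : ℕ) :
    ∃ l1 l2 l3, l1 + l2 + l3 = k1 + k2 + k3 + 1 ∧
      Set.EqOn (pd i (gradPow k1 k2 k3 f)) (gradPow l1 l2 l3 f) openBall3 := by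
  have h2 := hf.pd_iterate 2 k3
  have h1 := h2.pd_iterate 1 k2
  fin_cases i
  · refine ⟨k1 + 1, k2, k3, by ring, ?_⟩
    intro x _
    simp only [gradPow, Function.comp_apply, Function.iterate_succ_apply']
    rfl
  · refine ⟨k1, k2 + 1, k3, by ring, ?_⟩
    have := pd_iterate_comm h1 1 0 k1
    simp only [gradPow, Function.comp_apply, Function.iterate_succ_apply']
    exact this
  · refine ⟨k1, k2, k3 + 1, by ring, ?_⟩
    have := (pd_iterate_comm h1 2 0 k1).trans
      (pd_iterate_congr (pd_iterate_comm h2 2 1 k2) 0 k1)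
    simp only [gradPow, Function.comp_apply, Function.iterate_succ_apply']
    exact this

/-! ### The one-step Hardy inequality -/

/-- A continuous nondecreasing ramp, `0` for `t ≤ ε` and `1` for `t ≥ 2ε`. -/
def ramp (ε t : ℝ) : ℝ := max 0 (min 1 ((t - ε) / ε))

/-- The primitive of the ramp vanishing at `0`; a `C¹` approximation of `t ↦ max t 0` which
vanishes for `t ≤ ε`. -/
def rampInt (ε t : ℝ) : ℝ := ∫ s in (0 : ℝ)..t, ramp ε s

lemma continuous_ramp (ε : ℝ) : Continuous (ramp ε) := by
  unfold ramp; fun_prop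

lemma ramp_nonneg (ε t : ℝ) : 0 ≤ ramp ε t := le_max_left _ _

lemma ramp_le_one (ε t : ℝ) : ramp ε t ≤ 1 := max_le zero_le_one (min_le_left _ _)

lemma ramp_eq_zero {ε t : ℝ} (hε : 0 < ε) (ht : t ≤ ε) : ramp ε t = 0 :=
  max_eq_left ((min_le_right _ _).trans (div_nonpos_of_nonpos_of_nonneg (by linarith) hε.le))

lemma ramp_eq_one {ε t : ℝ} (hε : 0 < ε) (ht : 2 * ε ≤ t) : ramp ε t = 1 := by
  unfold ramp
  rw [min_eq_left ((le_div_iff₀ hε).2 (by linarith))]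
  simp

lemma ramp_mono {ε : ℝ} (hε : 0 < ε) : Monotone (ramp ε) := by
  intro s t h
  unfold ramp
  gcongr

lemma hasDerivAt_rampInt (ε t : ℝ) : HasDerivAt (rampInt ε) (ramp ε t) t :=
  intervalIntegral.integral_hasDerivAt_right ((continuous_ramp ε).intervalIntegrable _ _)
    (continuous_ramp ε).stronglyMeasurable.stronglyMeasurableAtFilter
    (continuous_ramp ε).continuousAt

lemma contDiff_rampInt (ε : ℝ) : ContDiff ℝ 1 (rampInt ε) := by
  rw [contDiff_one_iff_deriv]
  refine ⟨fun t => (hasDerivAt_rampInt ε t).differentiableAt, ?_⟩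
  have : deriv (rampInt ε) = ramp ε := funext fun t => (hasDerivAt_rampInt ε t).deriv
  rw [this]
  exact continuous_ramp ε

lemma rampInt_eq_zero {ε t : ℝ} (hε : 0 < ε) (ht : t ≤ ε) : rampInt ε t = 0 := by
  unfold rampInt
  rw [intervalIntegral.integral_congr (g := fun _ => (0 : ℝ))]
  · simp
  · intro s hs
    refine ramp_eq_zero hε ?_
    have := hs.2
    exact this.trans (max_le hε.le ht)

lemma rampInt_nonneg {ε t : ℝ} (ht : 0 ≤ t) : 0 ≤ rampInt ε t :=
  intervalIntegral.integral_nonneg ht fun s _ => ramp_nonneg ε s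

lemma rampInt_le {ε t : ℝ} (hε : 0 < ε) (ht : 0 ≤ t) : rampInt ε t ≤ t * ramp ε t := by
  have h := intervalIntegral.integral_mono_on (a := 0) (b := t) ht
    ((continuous_ramp ε).intervalIntegrable _ _)
    (continuous_const.intervalIntegrable (μ := volume) _ _)
    (g := fun _ => ramp ε t) (fun s hs => ramp_mono hε hs.2)
  simpa [rampInt] using h

/-- The compactly supported test density `t^{2n} φ_ε(t) f²`, with `t = 1 - |x|²` and `φ_ε` the
primitive of the ramp. -/
def testH (ε : ℝ) (n : ℕ) (f : V3 → ℝ) (x : V3) : ℝ :=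
  bdf x ^ (2 * n) * rampInt ε (bdf x) * f x ^ 2

lemma testH_eventually_zero {ε : ℝ} (hε : 0 < ε) (n : ℕ) (f : V3 → ℝ) {x : V3}
    (hx : x ∉ openBall3) : testH ε n f =ᶠ[nhds x] 0 := by
  have h0 : bdf x < ε := lt_of_le_of_lt (not_lt.1 fun h => hx ((mem_openBall3_iff x).2 h)) hε
  filter_upwards [contDiff_bdf.continuous.continuousAt.eventually_lt_const h0] with y hy
  simp [testH, rampInt_eq_zero hε (le_of_lt hy)]

lemma contDiff_testH {ε : ℝ} (hε : 0 < ε) (n : ℕ) {f : V3 → ℝ} (hf : SmoothIn f) :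
    ContDiff ℝ 1 (testH ε n f) := by
  rw [contDiff_iff_contDiffAt]
  intro x
  by_cases hx : x ∈ openBall3
  · have hb : ContDiffAt ℝ 1 bdf x := (contDiff_bdf.of_le (by simp)).contDiffAt
    have hf1 : ContDiffAt ℝ 1 f x := (hf.contDiffAt hx).of_le (by simp)
    exact ((hb.pow _).mul ((contDiff_rampInt ε).contDiffAt.comp x hb)).mul (hf1.pow 2)
  · exact contDiffAt_const.congr_of_eventuallyEq (testH_eventually_zero hε n f hx)

lemma hasCompactSupport_testH {ε : ℝ} (hε : 0 < ε) (n : ℕ) (f : V3 → ℝ) :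
    HasCompactSupport (testH ε n f) := by
  refine HasCompactSupport.intro (isCompact_closedBall (0 : V3) 1) fun x hx => ?_
  refine (testH_eventually_zero hε n f fun hb => hx ?_).eq_of_nhds
  rw [mem_openBall3_iff] at hb
  rw [mem_closedBall_zero_iff, pi_norm_le_iff_of_nonneg zero_le_one]
  intro i
  rw [Real.norm_eq_abs, ← sq_le_one_iff_abs_le_one]
  have := Finset.single_le_sum (f := fun i => x i ^ 2) (fun j _ => sq_nonneg _) (mem_univ i)
  unfold bdf at hb
  linarith

lemma pd_testH {ε : ℝ} (n : ℕ) {f : V3 → ℝ} (hf : SmoothIn f) {x : V3}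
    (hx : x ∈ openBall3) (i : Fin 3) :
    pd i (testH ε n f) x =
      -2 * x i * ((2 * n : ℕ) * bdf x ^ (2 * n - 1) * rampInt ε (bdf x)
          + bdf x ^ (2 * n) * ramp ε (bdf x)) * f x ^ 2
        + bdf x ^ (2 * n) * rampInt ε (bdf x) * (2 * f x * pd i f x) := by
  have hb : HasFDerivAt bdf (fderiv ℝ bdf x) x :=
    ((contDiff_bdf.differentiable (by simp)) x).hasFDerivAt
  have hf1 : HasFDerivAt f (fderiv ℝ f x) x :=
    ((hf.contDiffAt hx).differentiableAt (by simp)).hasFDerivAt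
  have hr := (hasDerivAt_rampInt ε (bdf x)).comp_hasFDerivAt x hb
  have h := ((hb.pow (2 * n)).mul hr).mul (hf1.pow 2)
  have e : pd i bdf x = fderiv ℝ bdf x (Pi.single i 1) := rfl
  rw [pd_bdf] at e
  have h' : HasFDerivAt (testH ε n f) _ x := h
  unfold pd
  rw [h'.fderiv]
  simp [← e]
  ring

/-- The divergence of the field `x ↦ testH x • x`. -/
def divH (ε : ℝ) (n : ℕ) (f : V3 → ℝ) (x : V3) : ℝ :=
  ∑ i, (testH ε n f x + x i * pd i (testH ε n f) x)

/-- Integration by parts of the compactly supported `testH` against a coordinate function. -/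
lemma integrable_divH_term {ε : ℝ} (hε : 0 < ε) (n : ℕ) {f : V3 → ℝ} (hf : SmoothIn f)
    (i : Fin 3) :
    Integrable (testH ε n f) ∧ Integrable (fun x => x i * pd i (testH ε n f) x) ∧
      ∫ x, (x i * pd i (testH ε n f) x) = - ∫ x, testH ε n f x := by
  have hc := contDiff_testH hε n hf
  have hs := hasCompactSupport_testH hε n f
  have hd : Continuous (pd i (testH ε n f)) :=
    (hc.continuous_fderiv (by simp)).clm_apply continuous_const
  have hsd : HasCompactSupport (pd i (testH ε n f)) :=
    hs.fderiv_apply ℝ (Pi.single i 1)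
  have i1 : Integrable (testH ε n f) := hc.continuous.integrable_of_hasCompactSupport hs
  have i2 : Integrable (fun x : V3 => x i * pd i (testH ε n f) x) :=
    ((continuous_apply i).mul hd).integrable_of_hasCompactSupport hsd.mul_left
  have i3 : Integrable (fun x : V3 => x i * testH ε n f x) :=
    ((continuous_apply i).mul hc.continuous).integrable_of_hasCompactSupport hs.mul_left
  have hx : ∀ x : V3, fderiv ℝ (fun y : V3 => y i) x (Pi.single i 1) = 1 := by
    intro x
    have h : HasFDerivAt (fun y : V3 => y i) (ContinuousLinearMap.proj i : V3 →L[ℝ] ℝ) x :=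
      hasFDerivAt_apply i x
    rw [h.fderiv]
    simp
  refine ⟨i1, i2, ?_⟩
  have := integral_mul_fderiv_eq_neg_fderiv_mul_of_integrable (μ := (volume : Measure V3))
    (f := fun y : V3 => y i) (g := testH ε n f) (v := Pi.single i 1)
    (by simpa [hx] using i1) i2 i3 (fun x _ => by fun_prop)
    (fun x _ => hc.differentiable (by simp) x)
  simpa [hx, pd] using this

lemma integral_divH {ε : ℝ} (hε : 0 < ε) (n : ℕ) {f : V3 → ℝ} (hf : SmoothIn f) :
    Integrable (divH ε n f) ∧ ∫ x, divH ε n f x = 0 := by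
  have h := integrable_divH_term hε n hf
  have hi : ∀ i ∈ (Finset.univ : Finset (Fin 3)),
      Integrable (fun x => testH ε n f x + x i * pd i (testH ε n f) x) :=
    fun i _ => (h i).1.add (h i).2.1
  unfold divH
  refine ⟨integrable_finsetSum _ hi, ?_⟩
  rw [integral_finsetSum _ hi]
  refine Finset.sum_eq_zero fun i _ => ?_
  rw [integral_add (h i).1 (h i).2.1, (h i).2.2]
  ring

lemma divH_eq_zero {ε : ℝ} (hε : 0 < ε) (n : ℕ) (f : V3 → ℝ) {x : V3}
    (hx : x ∉ openBall3) : divH ε n f x = 0 := by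
  have h := testH_eventually_zero hε n f hx
  simp [divH, pd, h.fderiv_eq, h.eq_of_nhds]

lemma setIntegral_divH {ε : ℝ} (hε : 0 < ε) (n : ℕ) {f : V3 → ℝ} (hf : SmoothIn f) :
    ∫ x in openBall3, divH ε n f x = 0 := by
  rw [setIntegral_eq_integral_of_forall_compl_eq_zero fun x hx => divH_eq_zero hε n f hx]
  exact (integral_divH hε n hf).2

/-- The zeroth- and first-order energy density on the right-hand side of Hardy's inequality. -/
def density1 (n : ℕ) (f : V3 → ℝ) (x : V3) : ℝ :=
  bdf x ^ (2 * n + 2) * (f x ^ 2 + ∑ i, pd i f x ^ 2)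

/-- The pointwise form of Hardy's inequality: up to a divergence, the weighted `f²` is dominated
by the energy density. It rests on `φ_ε(t) ≤ t φ_ε'(t)` and `|x|² = 1 - t`. -/
lemma pointwise_bound {ε : ℝ} (hε : 0 < ε) (n : ℕ) {f : V3 → ℝ} (hf : SmoothIn f) {x : V3}
    (hx : x ∈ openBall3) :
    bdf x ^ (2 * n) * ramp ε (bdf x) * f x ^ 2 ≤ -divH ε n f x + 13 * density1 n f x := by
  have ht : 0 < bdf x := (mem_openBall3_iff x).1 hx
  set t := bdf x with htdef
  have hr : ∑ i, x i ^ 2 = 1 - t := by rw [htdef]; unfold bdf; ring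
  have hr0 : 0 ≤ ∑ i, x i ^ 2 := by positivity
  set ψ := ramp ε t
  set φ := rampInt ε t
  have hψ0 : 0 ≤ ψ := ramp_nonneg _ _
  have hψ1 : ψ ≤ 1 := ramp_le_one _ _
  have hφ0 : 0 ≤ φ := rampInt_nonneg ht.le
  have hφ1 : φ ≤ t * ψ := rampInt_le hε ht.le
  set X := ∑ i, x i * pd i f x
  set G := ∑ i, pd i f x ^ 2
  have hG : 0 ≤ G := by positivity
  -- Cauchy-Schwarz and `|x| ≤ 1`
  have hX : X ^ 2 ≤ G := by
    have h := Finset.sum_mul_sq_le_sq_mul_sq Finset.univ x (fun i => pd i f x)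
    change X ^ 2 ≤ (∑ i, x i ^ 2) * G at h
    rw [hr] at h
    nlinarith
  have hdiv : divH ε n f x = t ^ (2 * n) * (3 * φ * f x ^ 2
      - 2 * (1 - t) * ψ * f x ^ 2 + 2 * φ * f x * X)
      - 2 * (1 - t) * ((2 * n : ℕ) * t ^ (2 * n - 1) * φ) * f x ^ 2 := by
    have hX' : X = x 0 * pd 0 f x + x 1 * pd 1 f x + x 2 * pd 2 f x := by
      simp [X, Fin.sum_univ_three]
    have hr' : x 0 ^ 2 + x 1 ^ 2 + x 2 ^ 2 = 1 - t := by
      rw [← hr]; simp [Fin.sum_univ_three]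
    unfold divH
    simp only [pd_testH n hf hx, Fin.sum_univ_three]
    rw [← hr', hX']
    simp only [testH]
    change _ = _
    simp only [← htdef]
    ring
  -- the term from differentiating `t ^ (2 * n)` has a favourable sign and is discarded
  have hpos : 0 ≤ 2 * (1 - t) * ((2 * n : ℕ) * t ^ (2 * n - 1) * φ) * f x ^ 2 := by
    have : 0 ≤ 1 - t := by rw [← hr]; exact hr0
    positivity
  -- the weight-free core, after factoring out `t ^ (2 * n)`
  have core : ψ * f x ^ 2 ≤ -(3 * φ * f x ^ 2 - 2 * (1 - t) * ψ * f x ^ 2 + 2 * φ * f x * X)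
      + 13 * (t ^ 2 * (f x ^ 2 + G)) := by
    have a1 : φ * f x ^ 2 ≤ t * ψ * f x ^ 2 := by gcongr
    have a2 : 2 * φ * f x * X ≤ 2 * (t * ψ) * |f x * X| := by
      calc 2 * φ * f x * X = 2 * φ * (f x * X) := by ring
        _ ≤ 2 * φ * |f x * X| := by gcongr; exact le_abs_self _
        _ ≤ _ := by gcongr
    have a3 : 2 * t * |f x * X| ≤ f x ^ 2 / 2 + 2 * (t ^ 2 * X ^ 2) := by
      rw [abs_mul]
      have := sq_nonneg (|f x| - 2 * t * |X|)
      rw [← sq_abs (f x), ← sq_abs X]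
      nlinarith
    have a4 : t ^ 2 * X ^ 2 ≤ t ^ 2 * G := by gcongr
    have a5 : 2 * (t * ψ) * |f x * X| ≤ ψ * (f x ^ 2 / 2 + 2 * (t ^ 2 * G)) := by
      calc 2 * (t * ψ) * |f x * X| = ψ * (2 * t * |f x * X|) := by ring
        _ ≤ _ := by gcongr; linarith
    have a6 : ψ * (2 * (t ^ 2 * G)) ≤ 1 * (2 * (t ^ 2 * G)) := by gcongr
    have a7 : 5 * t * (ψ * f x ^ 2) ≤ (1 / 2 + 25 / 2 * t ^ 2) * (ψ * f x ^ 2) := by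
      gcongr; nlinarith [sq_nonneg (5 * t - 1)]
    have a8 : 25 / 2 * t ^ 2 * (ψ * f x ^ 2) ≤ 25 / 2 * t ^ 2 * (1 * f x ^ 2) := by gcongr
    have a9 : 0 ≤ t ^ 2 * f x ^ 2 := by positivity
    have a10 : 0 ≤ t ^ 2 * G := by positivity
    linarith
  have h := mul_le_mul_of_nonneg_left core (pow_nonneg ht.le (2 * n))
  have e : density1 n f x = t ^ (2 * n) * (t ^ 2 * (f x ^ 2 + G)) := by
    unfold density1; rw [← htdef, pow_add]; ring
  rw [hdiv, e]
  linarith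

lemma SmoothIn.continuousOn {f : V3 → ℝ} (hf : SmoothIn f) : ContinuousOn f openBall3 :=
  ContDiffOn.continuousOn hf

lemma continuousOn_density1 (n : ℕ) {f : V3 → ℝ} (hf : SmoothIn f) :
    ContinuousOn (density1 n f) openBall3 := by
  have hb : ContinuousOn bdf openBall3 := contDiff_bdf.continuous.continuousOn
  have hp : ∀ i, ContinuousOn (pd i f) openBall3 := fun i => (hf.pd i).continuousOn
  unfold density1
  exact (hb.pow _).mul ((hf.continuousOn.pow 2).add
    (continuousOn_finsetSum _ fun i _ => (hp i).pow 2))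

lemma density1_nonneg (n : ℕ) (f : V3 → ℝ) {x : V3} (hx : x ∈ openBall3) :
    0 ≤ density1 n f x := by
  have := ((mem_openBall3_iff x).1 hx).le
  unfold density1
  positivity

/-- Hardy's inequality with the ramp cutoff; the constant does not depend on `ε`. -/
lemma hardy_ramp {ε : ℝ} (hε : 0 < ε) (n : ℕ) {f : V3 → ℝ} (hf : SmoothIn f) :
    ∫⁻ x in openBall3, ENNReal.ofReal (bdf x ^ (2 * n) * ramp ε (bdf x) * f x ^ 2) ≤
      13 * ∫⁻ x in openBall3, ENNReal.ofReal (density1 n f x) := by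
  have hmeas : MeasurableSet openBall3 := isOpen_openBall3.measurableSet
  by_cases hfin : ∫⁻ x in openBall3, ENNReal.ofReal (density1 n f x) = ⊤
  · rw [hfin, ENNReal.mul_top (by norm_num)]; exact le_top
  have hnn : 0 ≤ᵐ[volume.restrict openBall3] density1 n f :=
    (ae_restrict_iff' hmeas).2 (Filter.Eventually.of_forall fun x hx => density1_nonneg n f hx)
  have hint : Integrable (density1 n f) (volume.restrict openBall3) := by
    refine ⟨(continuousOn_density1 n hf).aestronglyMeasurable hmeas, ?_⟩
    rw [hasFiniteIntegral_iff_ofReal hnn]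
    exact lt_top_iff_ne_top.2 hfin
  have hint13 := hint.const_mul 13
  have hdiv := (integral_divH hε n hf).1.integrableOn (s := openBall3)
  have hle : ∀ x ∈ openBall3, bdf x ^ (2 * n) * ramp ε (bdf x) * f x ^ 2 ≤
      -divH ε n f x + 13 * density1 n f x := fun x hx => pointwise_bound hε n hf hx
  calc ∫⁻ x in openBall3, ENNReal.ofReal (bdf x ^ (2 * n) * ramp ε (bdf x) * f x ^ 2)
      ≤ ∫⁻ x in openBall3, ENNReal.ofReal (-divH ε n f x + 13 * density1 n f x) :=
        setLIntegral_mono' hmeas fun x hx => ENNReal.ofReal_le_ofReal (hle x hx)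
    _ = ENNReal.ofReal (∫ x in openBall3, (-divH ε n f x + 13 * density1 n f x)) := by
        refine (ofReal_integral_eq_lintegral_ofReal (hdiv.neg.add hint13) ?_).symm
        refine (ae_restrict_iff' hmeas).2 (Filter.Eventually.of_forall fun x hx => ?_)
        refine le_trans ?_ (hle x hx)
        have := ((mem_openBall3_iff x).1 hx).le
        have := ramp_nonneg ε (bdf x)
        simp only [Pi.zero_apply]
        positivity
    _ = ENNReal.ofReal (13 * ∫ x in openBall3, density1 n f x) := by
        congr 1
        rw [integral_add (f := fun x => -divH ε n f x) hdiv.neg hint13, integral_neg,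
          setIntegral_divH hε n hf, integral_const_mul]
        ring
    _ = 13 * ∫⁻ x in openBall3, ENNReal.ofReal (density1 n f x) := by
        rw [ENNReal.ofReal_mul (by norm_num), ofReal_integral_eq_lintegral_ofReal hint hnn]
        norm_num

/-- Hardy's inequality with weight `bdf`, from `hardy_ramp` by monotone convergence: the ball is
exhausted by the sets where the ramp with parameter `1 / (k + 1)` equals `1`. -/
lemma hardy_bdf (n : ℕ) {f : V3 → ℝ} (hf : SmoothIn f) :
    ∫⁻ x in openBall3, ENNReal.ofReal (bdf x ^ (2 * n) * f x ^ 2) ≤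
      13 * ∫⁻ x in openBall3, ENNReal.ofReal (density1 n f x) := by
  set S : ℕ → Set V3 := fun k => {x | 2 * (1 / ((k : ℝ) + 1)) ≤ bdf x} with hS
  have hpos : ∀ k : ℕ, (0 : ℝ) < 1 / ((k : ℝ) + 1) := fun k => by positivity
  have hSm : ∀ k, MeasurableSet (S k) := fun k =>
    (isClosed_le continuous_const contDiff_bdf.continuous).measurableSet
  have hsub : ∀ k, S k ⊆ openBall3 := fun k x hx =>
    (mem_openBall3_iff x).2 (lt_of_lt_of_le (by have := hpos k; linarith) hx)
  have hmono : Monotone S := by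
    intro j k hjk x hx
    have hx' : 2 * (1 / ((j : ℝ) + 1)) ≤ bdf x := hx
    change 2 * (1 / ((k : ℝ) + 1)) ≤ bdf x
    refine le_trans ?_ hx'
    gcongr
  have hU : openBall3 = ⋃ k, S k := by
    refine Set.Subset.antisymm (fun x hx => ?_) (Set.iUnion_subset hsub)
    obtain ⟨k, hk⟩ := exists_nat_one_div_lt (half_pos ((mem_openBall3_iff x).1 hx))
    refine Set.mem_iUnion.2 ⟨k, ?_⟩
    change 2 * (1 / ((k : ℝ) + 1)) ≤ bdf x
    linarith
  conv_lhs => rw [hU]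
  rw [setLIntegral_iUnion_of_directed _ (directed_of_isDirected_le hmono)]
  refine iSup_le fun k => le_trans ?_ (hardy_ramp (hpos k) n hf)
  refine le_trans (le_of_eq ?_) (lintegral_mono_set (hsub k))
  refine setLIntegral_congr_fun (hSm k) fun x hx => ?_
  simp only [ramp_eq_one (hpos k) hx, mul_one]

/-- The squared `L²` norm with weight `d^{2n}` over the open ball, as an extended real. -/
def energy (n : ℕ) (f : V3 → ℝ) : ENNReal :=
  ∫⁻ x in openBall3, ENNReal.ofReal (dOm x ^ (2 * n) * f x ^ 2)

lemma energy_congr (n : ℕ) {f g : V3 → ℝ} (h : Set.EqOn f g openBall3) :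
    energy n f = energy n g :=
  setLIntegral_congr_fun isOpen_openBall3.measurableSet fun x hx => by simp only [h hx]

/-- Hardy's inequality: two powers of the distance are gained at the price of one derivative. -/
lemma hardy_energy (n : ℕ) {f : V3 → ℝ} (hf : SmoothIn f) :
    energy n f ≤ ENNReal.ofReal (13 * 2 ^ (2 * n + 2)) *
      (energy (n + 1) f + ∑ i, energy (n + 1) (pd i f)) := by
  have hmeas : MeasurableSet openBall3 := isOpen_openBall3.measurableSet
  have hd : Continuous dOm := by
    unfold dOm enorm3; fun_prop
  have hm : ∀ g : V3 → ℝ, SmoothIn g → AEMeasurable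
      (fun x => ENNReal.ofReal (dOm x ^ (2 * (n + 1)) * g x ^ 2)) (volume.restrict openBall3) :=
    fun g hg => (((hd.pow _).continuousOn.mul (hg.continuousOn.pow 2)).aemeasurable
      hmeas).ennreal_ofReal
  calc energy n f ≤ ∫⁻ x in openBall3, ENNReal.ofReal (bdf x ^ (2 * n) * f x ^ 2) := by
        refine setLIntegral_mono' hmeas fun x hx => ENNReal.ofReal_le_ofReal ?_
        obtain ⟨h0, h1, _⟩ := dOm_le_bdf hx
        gcongr
    _ ≤ 13 * ∫⁻ x in openBall3, ENNReal.ofReal (density1 n f x) := hardy_bdf n hf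
    _ ≤ 13 * ∫⁻ x in openBall3, ENNReal.ofReal (2 ^ (2 * n + 2)) *
          (ENNReal.ofReal (dOm x ^ (2 * (n + 1)) * f x ^ 2)
            + ∑ i, ENNReal.ofReal (dOm x ^ (2 * (n + 1)) * pd i f x ^ 2)) := by
        gcongr 13 * ?_
        refine setLIntegral_mono' hmeas fun x hx => ?_
        obtain ⟨h0, h1, h2⟩ := dOm_le_bdf hx
        rw [← ENNReal.ofReal_sum_of_nonneg (fun i _ => by positivity),
          ← ENNReal.ofReal_add (by positivity) (by positivity),
          ← ENNReal.ofReal_mul (by positivity), ← Finset.mul_sum, ← mul_add, ← mul_assoc,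
          show 2 * (n + 1) = 2 * n + 2 by ring, ← mul_pow]
        refine ENNReal.ofReal_le_ofReal ?_
        unfold density1
        have : 0 ≤ bdf x := h0.le.trans h1
        gcongr
    _ = _ := by
        rw [lintegral_const_mul' _ _ ENNReal.ofReal_ne_top, lintegral_add_left' (hm f hf),
          lintegral_finsetSum' _ fun i _ => hm _ (hf.pd i), ENNReal.ofReal_mul (by norm_num),
          mul_assoc]
        simp only [energy]
        norm_num

/-! ### Iteration and comparison with the norms -/

/-- The sum of the `d^{2n}`-weighted energies of all derivatives of order at most `N`. -/
def totalEnergy (n N : ℕ) (F : V3 → ℝ) : ENNReal :=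
  ∑ q ∈ kIdx N, energy n (gradPow q.1 q.2.1 q.2.2 F)

lemma mem_kIdx {N : ℕ} {q : ℕ × ℕ × ℕ} : q ∈ kIdx N ↔ q.1 + q.2.1 + q.2.2 ≤ N := by
  simp only [kIdx, Finset.mem_filter, Finset.mem_product, Finset.mem_range]
  omega

lemma energy_le_totalEnergy {n N : ℕ} (F : V3 → ℝ) {k1 k2 k3 : ℕ} (h : k1 + k2 + k3 ≤ N) :
    energy n (gradPow k1 k2 k3 F) ≤ totalEnergy n N F :=
  Finset.single_le_sum (f := fun q : ℕ × ℕ × ℕ => energy n (gradPow q.1 q.2.1 q.2.2 F))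
    (fun _ _ => zero_le) (mem_kIdx.2 h : (k1, k2, k3) ∈ kIdx N)

/-- Hardy's inequality summed over all derivatives: lowering the weight exponent by two and the
order by one. -/
lemma totalEnergy_step (n N : ℕ) : ∃ C : ℝ, 0 < C ∧ ∀ F : V3 → ℝ, SmoothIn F →
    totalEnergy n N F ≤ ENNReal.ofReal C * totalEnergy (n + 1) (N + 1) F := by
  have hne : 0 < ((kIdx N).card : ℝ) := by
    exact_mod_cast Finset.card_pos.2 ⟨(0, 0, 0), mem_kIdx.2 (by simp)⟩
  refine ⟨(kIdx N).card * ((13 * 2 ^ (2 * n + 2)) * 4), by positivity, fun F hF => ?_⟩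
  have h : ∀ q ∈ kIdx N, energy n (gradPow q.1 q.2.1 q.2.2 F) ≤
      ENNReal.ofReal ((13 * 2 ^ (2 * n + 2)) * 4) * totalEnergy (n + 1) (N + 1) F := by
    intro q hq
    have hq' := mem_kIdx.1 hq
    refine (hardy_energy n (hF.gradPow q.1 q.2.1 q.2.2)).trans ?_
    rw [ENNReal.ofReal_mul (p := 13 * 2 ^ (2 * n + 2)) (q := 4) (by positivity), mul_assoc]
    gcongr
    have h1 : ∀ i, energy (n + 1) (pd i (gradPow q.1 q.2.1 q.2.2 F)) ≤
        totalEnergy (n + 1) (N + 1) F := by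
      intro i
      obtain ⟨l1, l2, l3, hl, he⟩ := pd_gradPow hF i q.1 q.2.1 q.2.2
      rw [energy_congr _ he]
      exact energy_le_totalEnergy F (by omega)
    calc energy (n + 1) (gradPow q.1 q.2.1 q.2.2 F)
          + ∑ i, energy (n + 1) (pd i (gradPow q.1 q.2.1 q.2.2 F))
        ≤ totalEnergy (n + 1) (N + 1) F + ∑ _i : Fin 3, totalEnergy (n + 1) (N + 1) F :=
          add_le_add (energy_le_totalEnergy F (by omega)) (Finset.sum_le_sum fun i _ => h1 i)
      _ = ENNReal.ofReal 4 * totalEnergy (n + 1) (N + 1) F := by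
          rw [show ENNReal.ofReal 4 = 1 + 3 by norm_num]
          simp [add_mul]
  refine (Finset.sum_le_sum h).trans (le_of_eq ?_)
  rw [Finset.sum_const, nsmul_eq_mul, ENNReal.ofReal_mul hne.le, ENNReal.ofReal_natCast]
  ring

lemma totalEnergy_iterate (s m : ℕ) : ∃ C : ℝ, 0 < C ∧ ∀ F : V3 → ℝ, SmoothIn F →
    totalEnergy 0 s F ≤ ENNReal.ofReal C * totalEnergy m (s + m) F := by
  induction m with
  | zero => exact ⟨1, one_pos, fun F _ => by simp⟩
  | succ m ih =>
    obtain ⟨C, hC, h⟩ := ih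
    obtain ⟨D, hD, h'⟩ := totalEnergy_step m (s + m)
    refine ⟨C * D, by positivity, fun F hF => (h F hF).trans ?_⟩
    rw [ENNReal.ofReal_mul hC.le, mul_assoc]
    gcongr
    exact h' F hF

lemma restrict_Om : (volume : Measure V3).restrict Om = volume.restrict openBall3 :=
  Measure.restrict_congr_set Om_ae_eq

/-- The weight `d^{2n}` is an even power, hence nonnegative even outside the ball. -/
lemma ae_nonneg_weight (n : ℕ) (g : V3 → ℝ) (μ : Measure V3) :
    0 ≤ᵐ[μ] fun x => dOm x ^ (2 * n) * g x ^ 2 :=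
  Filter.Eventually.of_forall fun x => by
    have : 0 ≤ dOm x ^ (2 * n) := by rw [pow_mul]; positivity
    simp only [Pi.zero_apply]
    positivity

lemma energy_eq_ofReal {n : ℕ} {g : V3 → ℝ}
    (h : IntegrableOn (fun x => dOm x ^ (2 * n) * g x ^ 2) Om) :
    energy n g = ENNReal.ofReal (∫ x in Om, dOm x ^ (2 * n) * g x ^ 2) := by
  rw [ofReal_integral_eq_lintegral_ofReal h (ae_nonneg_weight n g _), restrict_Om]
  rfl

/-- **Hardy-type embedding** (Lemma D.1).  For `0 < a ≤ 2b` with `s = b − a/2` a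
nonnegative integer, `H^{a,b}(Ω)` embeds continuously in `H^{b−a/2}(Ω)`. -/
theorem hardy_type_embedding (b : ℕ) (hb : 0 < b) (a : ℝ) (ha : 0 < a)
    (hab : a ≤ 2 * (b : ℝ)) (s : ℕ) (hs : (s : ℝ) = (b : ℝ) - a / 2) :
    ∃ C > 0, ∀ F : V3 → ℝ,
      ContDiffOn ℝ (⊤ : ℕ∞) F {x : V3 | enorm3 x < 1} →
      (∀ q ∈ kIdx b, IntegrableOn
          (fun x => dOm x ^ a * (gradPow q.1 q.2.1 q.2.2 F x) ^ 2) Om) →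
      (∀ q ∈ kIdx s, IntegrableOn
          (fun x => (gradPow q.1 q.2.1 q.2.2 F x) ^ 2) Om) ∧
      HsNorm2 s F ≤ C * HabNorm2 a b F := by
  obtain ⟨m, rfl⟩ : ∃ m : ℕ, b = s + m := by
    have : (s : ℝ) ≤ b := by linarith
    exact Nat.exists_eq_add_of_le (by exact_mod_cast this)
  -- the exponent is the even integer `2 m`, so the real power is a natural power
  obtain rfl : a = ((2 * m : ℕ) : ℝ) := by push_cast at hs ⊢; linarith
  obtain ⟨C, hC, hmain⟩ := totalEnergy_iterate s m
  refine ⟨C, hC, fun F hF hint => ?_⟩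
  simp only [Real.rpow_natCast] at hint
  have hF' : SmoothIn F := hF
  have htot : totalEnergy m (s + m) F =
      ENNReal.ofReal (HabNorm2 ((2 * m : ℕ) : ℝ) (s + m) F) := by
    unfold totalEnergy HabNorm2
    simp only [Real.rpow_natCast]
    rw [ENNReal.ofReal_sum_of_nonneg fun q _ => integral_nonneg_of_ae (ae_nonneg_weight m _ _)]
    exact Finset.sum_congr rfl fun q hq => energy_eq_ofReal (hint q hq)
  have hbound : totalEnergy 0 s F ≤
      ENNReal.ofReal (C * HabNorm2 ((2 * m : ℕ) : ℝ) (s + m) F) := by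
    rw [ENNReal.ofReal_mul hC.le, ← htot]
    exact hmain F hF'
  have hHab : 0 ≤ HabNorm2 ((2 * m : ℕ) : ℝ) (s + m) F := by
    unfold HabNorm2
    simp only [Real.rpow_natCast]
    exact Finset.sum_nonneg fun q _ => integral_nonneg_of_ae (ae_nonneg_weight m _ _)
  have hint0 : ∀ q ∈ kIdx s, IntegrableOn
      (fun x => (gradPow q.1 q.2.1 q.2.2 F x) ^ 2) Om := by
    intro q hq
    unfold IntegrableOn
    rw [restrict_Om]
    refine ⟨((hF'.gradPow q.1 q.2.1 q.2.2).continuousOn.pow 2).aestronglyMeasurable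
      isOpen_openBall3.measurableSet, ?_⟩
    rw [hasFiniteIntegral_iff_ofReal (Filter.Eventually.of_forall fun x => sq_nonneg _)]
    refine lt_of_le_of_lt ?_ ((energy_le_totalEnergy (n := 0) F (mem_kIdx.1 hq)).trans
      hbound |>.trans_lt ENNReal.ofReal_lt_top)
    simp [energy]
  refine ⟨hint0, ?_⟩
  have hHs : totalEnergy 0 s F = ENNReal.ofReal (HsNorm2 s F) := by
    unfold totalEnergy HsNorm2
    rw [ENNReal.ofReal_sum_of_nonneg fun q _ => integral_nonneg fun x => sq_nonneg _]
    refine Finset.sum_congr rfl fun q hq => ?_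
    rw [energy_eq_ofReal (by simpa using hint0 q hq)]
    simp
  rw [hHs] at hbound
  exact (ENNReal.ofReal_le_ofReal_iff (by positivity)).1 hbound
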